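/- Let T be a finite tree on vertex set V rooted at a vertex r, let i be any vertex, and let w and w' be two weight functions for T. If [𝓛(w)^k]_{i,r} = [𝓛(w')^k]_{i,r} for every natural number k (equality of all Markov parameters from the input at r to a single sensor at node i), then the weight of the unique path from i to r is the same for both weight functions: the product of w over the edges of P_{i,r} equals the product of w' over the edges of P_{i,r}. -/

import Mathlib

/-!
The weight of the path `p` from `i` to `r` is itself a Markov parameter: it is the `(i, r)` entry of
`𝓛(w) ^ p.length`. Indeed the `(u, v)` entry of `𝓛(w) ^ k` is a weighted sum over the walks from `u`
to `v` with `k` steps, each step following an edge or staying put. There are none when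
`k < dist u v` (`stateMatrix_pow_eq_zero`), and for `k = dist u v` every such walk is a geodesic, so
in a tree it is the unique path (`stateMatrix_pow_length`). Both weight functions give the same
entry by hypothesis.
-/

open Finset

/-- A weight function for the simple graph `G`: symmetric, positive exactly on
adjacent pairs, zero otherwise (and zero on the diagonal). -/
def IsWeightFn {V : Type*} (G : SimpleGraph V) (w : V → V → ℝ) : Prop :=
  (∀ u v, w u v = w v u) ∧
  (∀ u v, G.Adj u v → 0 < w u v) ∧
  (∀ u v, u ≠ v → ¬ G.Adj u v → w u v = 0) ∧
  (∀ v, w v v = 0)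

/-- The state matrix `𝓛(w)` (the negative of the weighted Laplacian):
`[𝓛(w)]_{u,v} = w(u,v)` for `u ≠ v`, and `[𝓛(w)]_{v,v} = -∑_{u ≠ v} w(v,u)`. -/
def stateMatrix {V : Type*} [Fintype V] [DecidableEq V] (w : V → V → ℝ) :
    Matrix V V ℝ :=
  Matrix.of fun u v => if u = v then -(∑ x ∈ Finset.univ.erase v, w v x) else w u v

/-- The weight of a walk: the product of the edge weights along it. -/
def walkWeight {V : Type*} {G : SimpleGraph V} (w : V → V → ℝ) {i r : V}
    (p : G.Walk i r) : ℝ :=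
  (p.darts.map fun d => w d.toProd.1 d.toProd.2).prod

/-- The off-diagonal support of `𝓛(w)` lies in the edge set. -/
lemma stateMatrix_eq_zero {V : Type*} [Fintype V] [DecidableEq V] {G : SimpleGraph V}
    {w : V → V → ℝ} (hw : IsWeightFn G w) {u x : V} (hne : u ≠ x) (hadj : ¬ G.Adj u x) :
    stateMatrix w u x = 0 := by
  simp [stateMatrix, hne, hw.2.2.1 u x hne hadj]

lemma stateMatrix_pow_eq_zero {V : Type*} [Fintype V] [DecidableEq V] {G : SimpleGraph V}
    (hG : G.Connected) {w : V → V → ℝ} (hw : IsWeightFn G w) (k : ℕ) :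
    ∀ u v : V, k < G.dist u v → (stateMatrix w ^ k) u v = 0 := by
  induction k with
  | zero =>
    intro u v hk
    have hne : u ≠ v := by
      rintro rfl
      simp at hk
    simp [Matrix.one_apply, hne]
  | succ k ih =>
    intro u v hk
    rw [pow_succ', Matrix.mul_apply]
    refine Finset.sum_eq_zero fun x _ => ?_
    by_cases hux : u = x
    · subst hux
      rw [ih u v (by omega), mul_zero]
    by_cases hadj : G.Adj u x
    · have h1 : G.dist u x = 1 := SimpleGraph.dist_eq_one_iff_adj.mpr hadj
      have h2 := hG.dist_triangle (u := u) (v := x) (w := v)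
      rw [ih x v (by omega), mul_zero]
    · rw [stateMatrix_eq_zero hw hux hadj, zero_mul]

lemma length_eq_dist_of_isTree {V : Type*} {G : SimpleGraph V} (hT : G.IsTree) {u v : V}
    {p : G.Walk u v} (hp : p.IsPath) : p.length = G.dist u v := by
  obtain ⟨q, hq, hl⟩ := hT.connected.exists_path_of_dist u v
  have h : (⟨p, hp⟩ : G.Path u v) = ⟨q, hq⟩ := (hT.isAcyclic.subsingleton_path u v).elim _ _
  rw [← hl, Subtype.mk.inj h]

/-- The path weight is a Markov parameter. -/
lemma stateMatrix_pow_length {V : Type*} [Fintype V] [DecidableEq V] {G : SimpleGraph V}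
    (hT : G.IsTree) {w : V → V → ℝ} (hw : IsWeightFn G w) {u v : V} (p : G.Walk u v)
    (hp : p.IsPath) : (stateMatrix w ^ p.length) u v = walkWeight w p := by
  induction p with
  | nil => simp [walkWeight]
  | @cons u y v hadj p ih =>
    have hlen := length_eq_dist_of_isTree hT hp
    rw [SimpleGraph.Walk.length_cons] at hlen
    rw [SimpleGraph.Walk.length_cons, pow_succ', Matrix.mul_apply,
      Finset.sum_eq_single_of_mem y (Finset.mem_univ y), ih hp.of_cons]
    · simp [walkWeight, stateMatrix, hadj.ne]
    intro x _ hxy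
    by_cases hux : u = x
    · subst hux
      rw [stateMatrix_pow_eq_zero hT.connected hw _ u v (by omega), mul_zero]
    by_cases hadj' : G.Adj u x
    · rw [stateMatrix_pow_eq_zero hT.connected hw _ x v, mul_zero]
      -- Otherwise a geodesic from `x` extends to a second geodesic from `u` to `v`.
      by_contra hle
      obtain ⟨q, hq⟩ := hT.connected.exists_walk_length_eq_dist x v
      have hge := SimpleGraph.dist_le (SimpleGraph.Walk.cons hadj' q)
      rw [SimpleGraph.Walk.length_cons] at hge
      have hpath : (SimpleGraph.Walk.cons hadj' q).IsPath := by
        apply SimpleGraph.Walk.isPath_of_length_eq_dist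
        rw [SimpleGraph.Walk.length_cons]
        omega
      have h : (⟨_, hpath⟩ : G.Path u v) = ⟨_, hp⟩ := (hT.isAcyclic.subsingleton_path u v).elim _ _
      have h2 := congrArg SimpleGraph.Walk.snd (Subtype.mk.inj h)
      simp at h2
      exact hxy h2
    · rw [stateMatrix_eq_zero hw hux hadj', zero_mul]

theorem pathWeight_identifiable_from_single_sensor
    {V : Type*} [Fintype V] [DecidableEq V] (G : SimpleGraph V)
    (hT : G.IsTree) (r i : V)
    (w w' : V → V → ℝ) (hw : IsWeightFn G w) (hw' : IsWeightFn G w')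
    (h : ∀ k : ℕ, (stateMatrix w ^ k) i r = (stateMatrix w' ^ k) i r)
    (p : G.Walk i r) (hp : p.IsPath) :
    walkWeight w p = walkWeight w' p := by
  rw [← stateMatrix_pow_length hT hw p hp, ← stateMatrix_pow_length hT hw' p hp, h]
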